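/- Let p_1 < p_2 < p_3 < ... denote the sequence of all prime numbers. Then the limit as N → ∞ of (∑_{i=1}^N φ(p_i − 1)) / (∑_{i=1}^N (p_i − 1)) exists and equals Artin's constant A = ∏_p (1 − 1/(p(p−1))), where the product runs over all primes p. -/

import Mathlib

open Filter

/-- Artin's constant `A = ∏_p (1 - 1/(p(p-1)))`, product over all primes. -/
noncomputable def artinConstant : ℝ :=
  ∏' p : Nat.Primes, (1 - 1 / (((p : ℕ) : ℝ) * (((p : ℕ) : ℝ) - 1)))

/-!
Writing `φ(p - 1) / (p - 1) = ∑_{d ∣ p - 1} μ(d) / d` and interchanging sums, the average of this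
quantity over primes `p ≤ N` with weight `log p` becomes `∑_d (μ(d) / d) θ(N; d, 1) / N`. For fixed
`d` the prime number theorem in arithmetic progressions gives `θ(N; d, 1) / N → 1 / φ(d)`; it comes
from the nonvanishing of Dirichlet `L`-functions on `Re s = 1` by the Wiener–Ikehara argument:
smoothing `e^{-u} ψ(e^u; d, 1)` against Fejér kernels turns it into Fourier integrals that vanish by
the Riemann–Lebesgue lemma.

The limit may be taken term by term because `θ(N; d, 1) ≪ (N / d) log (d + 1)` uniformly in `d` and
`N`. This is Chebyshev's argument: with `n = ⌊N / d⌋`, the product of the primes `p ≡ 1 (mod d)` in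
`(n, N]` divides the integer `d ^ n ∏_{1 ≤ k ≤ n} (d k + 1) / n!`. The limit
`∑_d μ(d) / (d φ(d))` is the Euler product `A`. Finally, summation by parts replaces the weight
`log p` by `p - 1`, since `(n - 1) / log n` is increasing.
-/

section FejerKernel

open MeasureTheory Real

/-- The Fejér kernel `(1 - cos x) / x ^ 2`, an integrable nonnegative function whose Fourier
transform is compactly supported. Writing it through `sinc` gives it the value `1 / 2` at `0`. -/
noncomputable def fejerKernel (x : ℝ) : ℝ := sinc (x / 2) ^ 2 / 2

lemma fejerKernel_zero : fejerKernel 0 = 1 / 2 := by simp [fejerKernel]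

lemma fejerKernel_nonneg (x : ℝ) : 0 ≤ fejerKernel x := by
  unfold fejerKernel; positivity

lemma fejerKernel_le_half (x : ℝ) : fejerKernel x ≤ 1 / 2 := by
  have h : sinc (x / 2) ^ 2 ≤ 1 := (sq_le_one_iff_abs_le_one _).2 (abs_sinc_le_one _)
  unfold fejerKernel; linarith

@[fun_prop]
lemma continuous_fejerKernel : Continuous fejerKernel :=
  ((continuous_sinc.comp (continuous_id.div_const 2)).pow 2).div_const 2

lemma fejerKernel_mul_sq (x : ℝ) : fejerKernel x * x ^ 2 = 1 - cos x := by
  rcases eq_or_ne x 0 with rfl | hx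
  · simp
  · have h := sin_sq_eq_half_sub (x / 2)
    rw [mul_div_cancel₀ x two_ne_zero] at h
    rw [fejerKernel, sinc_of_ne_zero (by simpa using hx), div_pow, h]
    field_simp

lemma fejerKernel_le_inv_one_add_sq (x : ℝ) : fejerKernel x ≤ 3 * (1 + x ^ 2)⁻¹ := by
  rw [← div_eq_mul_inv, le_div_iff₀ (by positivity), mul_add, mul_one, fejerKernel_mul_sq]
  linarith [fejerKernel_le_half x, neg_one_le_cos x]

lemma integrable_fejerKernel : Integrable fejerKernel := by
  refine (integrable_inv_one_add_sq.const_mul 3).mono' (by fun_prop) (ae_of_all _ fun x => ?_)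
  rw [norm_of_nonneg (fejerKernel_nonneg x)]
  exact fejerKernel_le_inv_one_add_sq x

lemma integrable_fejerKernel_comp_mul_sub {l : ℝ} (hl : l ≠ 0) (v : ℝ) :
    Integrable fun u => fejerKernel (l * (u - v)) :=
  (integrable_fejerKernel.comp_mul_left' hl).comp_sub_right v

lemma integral_fejerKernel_comp_mul_sub {l : ℝ} (hl : 0 < l) (v : ℝ) :
    ∫ u, fejerKernel (l * (u - v)) = l⁻¹ * ∫ x, fejerKernel x := by
  rw [integral_sub_right_eq_self (fun u => fejerKernel (l * u)) v, Measure.integral_comp_mul_left,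
    abs_of_pos (inv_pos.2 hl), smul_eq_mul]

lemma intervalIntegral_fejerKernel_comp_mul_sub {l : ℝ} (hl : l ≠ 0) (v η : ℝ) :
    ∫ u in (v - η)..(v + η), fejerKernel (l * (u - v)) =
      l⁻¹ * ∫ x in (-(l * η))..(l * η), fejerKernel x := by
  rw [intervalIntegral.integral_comp_sub_right (fun u => fejerKernel (l * u)) v,
    intervalIntegral.integral_comp_mul_left _ hl]
  simp

lemma integral_fejerKernel_pos : 0 < ∫ x, fejerKernel x := by
  rw [integral_pos_iff_support_of_nonneg fejerKernel_nonneg integrable_fejerKernel]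
  exact continuous_fejerKernel.isOpen_support.measure_pos _ ⟨0, by simp [fejerKernel_zero]⟩

lemma integral_one_sub_mul_cos (x : ℝ) :
    ∫ t in (0 : ℝ)..1, (1 - t) * cos (t * x) = fejerKernel x := by
  rcases eq_or_ne x 0 with rfl | hx
  · rw [fejerKernel_zero]
    simp only [mul_zero, cos_zero, mul_one]
    rw [intervalIntegral.integral_sub (by simp) (by simp)]
    norm_num
  · have h_deriv (t : ℝ) : HasDerivAt
        (fun t => (1 - t) * (sin (t * x) / x) - cos (t * x) / x ^ 2) ((1 - t) * cos (t * x)) t := by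
      have h_mul : HasDerivAt (fun t : ℝ => t * x) x t := hasDerivAt_mul_const x
      refine ((((hasDerivAt_id t).const_sub 1).mul (h_mul.sin.div_const x)).sub
        (h_mul.cos.div_const (x ^ 2))).congr_deriv ?_
      simp only [id_eq]
      field_simp
      ring
    rw [intervalIntegral.integral_eq_sub_of_hasDerivAt (fun t _ => h_deriv t)
      (Continuous.intervalIntegrable (by fun_prop) _ _),
      eq_div_of_mul_eq (pow_ne_zero 2 hx) (fejerKernel_mul_sq x)]
    simp only [zero_mul, one_mul, sub_self, sin_zero, cos_zero]
    ring

lemma re_integral_one_sub_mul_cexp (x : ℝ) :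
    (∫ t in (0 : ℝ)..1, ((1 - t : ℝ) : ℂ) * Complex.exp (-(t * x) * Complex.I)).re =
      fejerKernel x := by
  rw [← Complex.reCLM_apply, ← Complex.reCLM.intervalIntegral_comp_comm
    (Continuous.intervalIntegrable (by fun_prop) _ _), ← integral_one_sub_mul_cos]
  congr 1 with t
  rw [Complex.reCLM_apply, Complex.re_ofReal_mul, ← Complex.ofReal_mul, ← Complex.ofReal_neg,
    Complex.exp_ofReal_mul_I_re, cos_neg]

end FejerKernel

section LaplaceTauberian

open MeasureTheory Set Topology Complex

/-- The Laplace transform of `b`. It is only meaningful where the integral converges, which for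
bounded `b` is the half plane `0 < s.re`. -/
noncomputable def laplaceTransform (b : ℝ → ℝ) (s : ℂ) : ℂ :=
  ∫ u in Ioi (0 : ℝ), (b u : ℂ) * cexp (-s * u)

lemma norm_cexp_ofReal_add_mul_I (x y : ℝ) : ‖cexp (x + y * I)‖ = Real.exp x := by
  simp [norm_exp]

lemma integrableOn_mul_exp_neg_of_bounded {b : ℝ → ℝ} (hbm : Measurable b) {M : ℝ}
    (hb : ∀ u, |b u| ≤ M) {δ : ℝ} (hδ : 0 < δ) :
    IntegrableOn (fun u => b u * Real.exp (-δ * u)) (Ioi 0) :=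
  (integrableOn_exp_mul_Ioi (neg_lt_zero.2 hδ) 0).bdd_mul hbm.aestronglyMeasurable
    (ae_of_all _ hb)

lemma integrable_prod_laplaceTransform {b : ℝ → ℝ} (hbm : Measurable b) {M : ℝ}
    (hb : ∀ u, |b u| ≤ M) {δ : ℝ} (hδ : 0 < δ) (l v : ℝ) :
    Integrable (Function.uncurry fun t u : ℝ => ((1 - t : ℝ) : ℂ) * cexp (l * t * v * I) *
      ((b u : ℂ) * cexp (-(δ + l * t * I) * u)))
      ((volume.restrict (Ioc 0 1)).prod (volume.restrict (Ioi 0))) := by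
  have h_one_sub : IntegrableOn (fun t : ℝ => 1 - t) (Ioc 0 1) :=
    (Continuous.integrableOn_Icc (by fun_prop)).mono_set Ioc_subset_Icc_self
  refine (h_one_sub.mul_prod (integrableOn_mul_exp_neg_of_bounded hbm hb hδ)).mono
    (Measurable.aestronglyMeasurable (by fun_prop)) (ae_of_all _ fun ⟨t, u⟩ => le_of_eq ?_)
  have h_osc : ‖cexp (l * t * v * I)‖ = 1 := by
    simpa using norm_cexp_ofReal_add_mul_I 0 (l * t * v)
  have h_decay : ‖cexp (-(δ + l * t * I) * u)‖ = Real.exp (-δ * u) := by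
    rw [← norm_cexp_ofReal_add_mul_I (-δ * u) (-(l * t * u))]
    push_cast
    ring_nf
  simp only [Function.uncurry_apply_pair, norm_mul, h_osc, h_decay, norm_real, mul_one,
    Real.norm_eq_abs, Real.abs_exp]

lemma re_integral_one_sub_mul_laplaceTransform {b : ℝ → ℝ} (hbm : Measurable b) {M : ℝ}
    (hb : ∀ u, |b u| ≤ M) {δ : ℝ} (hδ : 0 < δ) (l v : ℝ) :
    (∫ t in (0 : ℝ)..1, ((1 - t : ℝ) : ℂ) * cexp (l * t * v * I) *
        laplaceTransform b (δ + l * t * I)).re =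
      ∫ u in Ioi (0 : ℝ), b u * fejerKernel (l * (u - v)) * Real.exp (-δ * u) := by
  have h_int := integrable_prod_laplaceTransform hbm hb hδ l v
  have h_int_right := h_int.integral_prod_right
  simp only [Function.uncurry_apply_pair] at h_int_right
  simp only [laplaceTransform, ← integral_const_mul]
  rw [intervalIntegral.integral_of_le zero_le_one, integral_integral_swap h_int,
    ← reCLM_apply, ← reCLM.integral_comp_comm h_int_right]
  congr 1 with u
  have h_factor (t : ℝ) : ((1 - t : ℝ) : ℂ) * cexp (l * t * v * I) *
      ((b u : ℂ) * cexp (-(δ + l * t * I) * u)) =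
      ((b u * Real.exp (-δ * u) : ℝ) : ℂ) *
        (((1 - t : ℝ) : ℂ) * cexp (-(t * (l * (u - v) : ℝ)) * I)) := by
    have h_exp : cexp (l * t * v * I) * cexp (-(δ + l * t * I) * u) =
        cexp (-δ * u) * cexp (-(t * (l * (u - v))) * I) := by
      rw [← exp_add, ← exp_add]; ring_nf
    push_cast
    linear_combination (1 - t : ℂ) * (b u : ℂ) * h_exp
  simp only [h_factor, integral_const_mul]
  rw [← intervalIntegral.integral_of_le zero_le_one, reCLM_apply, re_ofReal_mul,
    re_integral_one_sub_mul_cexp, mul_right_comm]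

lemma tendsto_integral_one_sub_mul_add_real {H : ℂ → ℂ}
    (hH : ContinuousOn H {s | 0 ≤ s.re}) (l v : ℝ) :
    Tendsto (fun δ : ℝ => ∫ t in (0 : ℝ)..1,
        ((1 - t : ℝ) : ℂ) * cexp (l * t * v * I) * H (δ + l * t * I)) (𝓝[>] 0)
      (𝓝 (∫ t in (0 : ℝ)..1, ((1 - t : ℝ) : ℂ) * cexp (l * t * v * I) * H (l * t * I))) := by
  -- With `|δ|` in place of `δ` the integrand is continuous on the whole plane.
  have h_cont : Continuous (Function.uncurry fun δ t : ℝ =>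
      ((1 - t : ℝ) : ℂ) * cexp (l * t * v * I) * H ((|δ| : ℝ) + l * t * I)) :=
    Continuous.mul (by fun_prop) (hH.comp_continuous (by fun_prop) fun z => by simp)
  have h_lim := (intervalIntegral.continuous_parametric_intervalIntegral_of_continuous'
    (μ := volume) h_cont 0 1).tendsto 0
  simp only [abs_zero, ofReal_zero, zero_add] at h_lim
  refine (h_lim.mono_left nhdsWithin_le_nhds).congr' ?_
  filter_upwards [self_mem_nhdsWithin] with δ hδ
  rw [abs_of_pos hδ]

lemma tendsto_integral_mul_exp_neg_mul {g : ℝ → ℝ} (hg : IntegrableOn g (Ioi 0)) :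
    Tendsto (fun δ : ℝ => ∫ u in Ioi (0 : ℝ), g u * Real.exp (-δ * u)) (𝓝[>] 0)
      (𝓝 (∫ u in Ioi (0 : ℝ), g u)) := by
  refine tendsto_integral_filter_of_dominated_convergence (fun u => |g u|) ?_ ?_ hg.abs ?_
  · exact Eventually.of_forall fun δ =>
      hg.aestronglyMeasurable.mul (Continuous.aestronglyMeasurable (by fun_prop))
  · filter_upwards [self_mem_nhdsWithin] with δ (hδ : 0 < δ)
    filter_upwards [ae_restrict_mem measurableSet_Ioi] with u (hu : 0 < u)
    rw [norm_mul, Real.norm_eq_abs, Real.norm_eq_abs, Real.abs_exp]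
    refine mul_le_of_le_one_right (abs_nonneg _) (Real.exp_le_one_iff.2 ?_)
    nlinarith [mul_pos hδ hu]
  · refine ae_of_all _ fun u => ?_
    have h_cont : Continuous fun δ : ℝ => g u * Real.exp (-δ * u) := by fun_prop
    simpa using (h_cont.tendsto 0).mono_left nhdsWithin_le_nhds

lemma integrable_mul_of_bounded {b g : ℝ → ℝ} (hbm : Measurable b) {M : ℝ}
    (hb : ∀ u, |b u| ≤ M) (hg : Integrable g) : Integrable fun u => b u * g u :=
  hg.bdd_mul hbm.aestronglyMeasurable (ae_of_all _ hb)

lemma re_integral_one_sub_mul_boundary {b : ℝ → ℝ} (hbm : Measurable b) {M : ℝ}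
    (hb : ∀ u, |b u| ≤ M) {H : ℂ → ℂ} (hH : ContinuousOn H {s | 0 ≤ s.re})
    (h_eq : EqOn H (laplaceTransform b) {s | 0 < s.re}) {l : ℝ} (hl : l ≠ 0) (v : ℝ) :
    (∫ t in (0 : ℝ)..1, ((1 - t : ℝ) : ℂ) * cexp (l * t * v * I) * H (l * t * I)).re =
      ∫ u in Ioi (0 : ℝ), b u * fejerKernel (l * (u - v)) := by
  have h_right := tendsto_integral_mul_exp_neg_mul
    (integrable_mul_of_bounded hbm hb (integrable_fejerKernel_comp_mul_sub hl v)).integrableOn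
  refine tendsto_nhds_unique
    ((continuous_re.tendsto _).comp (tendsto_integral_one_sub_mul_add_real hH l v))
    (h_right.congr' ?_)
  filter_upwards [self_mem_nhdsWithin] with δ (hδ : 0 < δ)
  rw [← re_integral_one_sub_mul_laplaceTransform hbm hb hδ, Function.comp_apply]
  congr 2 with t
  rw [h_eq (by simpa using hδ)]

lemma tendsto_intervalIntegral_mul_cexp_atTop (F : ℝ → ℂ) {l : ℝ} (hl : 0 < l) :
    Tendsto (fun v : ℝ => ∫ t in (0 : ℝ)..1, cexp (l * t * v * I) * F t) atTop (𝓝 0) := by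
  have h_freq : Tendsto (fun v : ℝ => v * (-l / (2 * Real.pi))) atTop (cocompact ℝ) :=
    (tendsto_id.atTop_mul_const_of_neg
      (div_neg_of_neg_of_pos (neg_lt_zero.2 hl) Real.two_pi_pos)).mono_right atBot_le_cocompact
  refine ((Real.tendsto_integral_exp_smul_cocompact ((Ioc 0 1).indicator F)).comp h_freq).congr
    fun v => ?_
  rw [Function.comp_apply, intervalIntegral.integral_of_le zero_le_one,
    ← integral_indicator measurableSet_Ioc]
  congr 1 with t
  rw [indicator_mul_right, Circle.smul_def, Real.fourierChar_apply, smul_eq_mul]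
  congr 3
  push_cast
  field_simp

lemma tendsto_integral_mul_fejerKernel {b : ℝ → ℝ} (hbm : Measurable b) {M : ℝ}
    (hb : ∀ u, |b u| ≤ M) {H : ℂ → ℂ} (hH : ContinuousOn H {s | 0 ≤ s.re})
    (h_eq : EqOn H (laplaceTransform b) {s | 0 < s.re}) {l : ℝ} (hl : 0 < l) :
    Tendsto (fun v => ∫ u in Ioi (0 : ℝ), b u * fejerKernel (l * (u - v))) atTop (𝓝 0) := by
  refine ((continuous_re.tendsto 0).comp (tendsto_intervalIntegral_mul_cexp_atTop
    (fun t => ((1 - t : ℝ) : ℂ) * H (l * t * I)) hl)).congr fun v => ?_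
  rw [← re_integral_one_sub_mul_boundary hbm hb hH h_eq hl.ne', Function.comp_apply]
  congr 2 with t
  ring

lemma window_le_integral_mul {b k : ℝ → ℝ} (hbm : Measurable b) {M : ℝ} (hb : ∀ u, |b u| ≤ M)
    (hk : Integrable k) (hk0 : ∀ u, 0 ≤ k u) {ε v η : ℝ} (hη : 0 ≤ η) (hv : η ≤ v)
    (h_window : ∀ u ∈ Icc (v - η) (v + η), ε ≤ b u) :
    (ε + M) * (∫ u in (v - η)..(v + η), k u) - M * ∫ u, k u ≤ ∫ u in Ioi (0 : ℝ), b u * k u := by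
  have hM : 0 ≤ M := (abs_nonneg _).trans (hb 0)
  have hbk := integrable_mul_of_bounded hbm hb hk
  have h_sub : Ioc (v - η) (v + η) ⊆ Ioi 0 := fun u hu => (sub_nonneg.2 hv).trans_lt hu.1
  have h_shift_int : Integrable fun u => b u * k u + M * k u := hbk.add (hk.const_mul M)
  have h_shift_nonneg (u : ℝ) : 0 ≤ b u * k u + M * k u := by
    rw [← add_mul]
    exact mul_nonneg (by linarith [(abs_le.1 (hb u)).1]) (hk0 u)
  rw [sub_le_iff_le_add]
  calc (ε + M) * ∫ u in (v - η)..(v + η), k u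
      = ∫ u in Ioc (v - η) (v + η), (ε + M) * k u := by
        rw [intervalIntegral.integral_of_le (by linarith), integral_const_mul]
    _ ≤ ∫ u in Ioc (v - η) (v + η), (b u * k u + M * k u) := by
        refine setIntegral_mono_on (hk.const_mul _).integrableOn h_shift_int.integrableOn
          measurableSet_Ioc fun u hu => ?_
        rw [← add_mul]
        exact mul_le_mul_of_nonneg_right
          (add_le_add_left (h_window u (Ioc_subset_Icc_self hu)) M) (hk0 u)
    _ ≤ ∫ u in Ioi (0 : ℝ), (b u * k u + M * k u) :=
        setIntegral_mono_set h_shift_int.integrableOn (ae_of_all _ h_shift_nonneg)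
          h_sub.eventuallyLE
    _ = (∫ u in Ioi (0 : ℝ), b u * k u) + M * ∫ u in Ioi (0 : ℝ), k u := by
        rw [integral_add hbk.integrableOn (hk.const_mul M).integrableOn, integral_const_mul]
    _ ≤ (∫ u in Ioi (0 : ℝ), b u * k u) + M * ∫ u, k u := by
        gcongr
        · exact ae_of_all _ hk0
        · exact Measure.restrict_le_self

lemma exists_window_fejerKernel {M ε η : ℝ} (hε : 0 < ε) (hη : 0 < η) :
    ∃ l > 0, M * ∫ x, fejerKernel x < (ε + M) * ∫ x in (-(l * η))..(l * η), fejerKernel x := by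
  have h_lin : Tendsto (fun l : ℝ => l * η) atTop atTop := tendsto_id.atTop_mul_const hη
  have h_lim := (intervalIntegral_tendsto_integral integrable_fejerKernel
    (tendsto_neg_atTop_atBot.comp h_lin) h_lin).const_mul (ε + M)
  have h_lt : M * ∫ x, fejerKernel x < (ε + M) * ∫ x, fejerKernel x :=
    mul_lt_mul_of_pos_right (lt_add_of_pos_left M hε) integral_fejerKernel_pos
  exact ((eventually_gt_atTop 0).and (h_lim.eventually_const_lt h_lt)).exists

lemma eventually_exists_lt_of_tendsto_fejerKernel {b : ℝ → ℝ} (hbm : Measurable b) {M : ℝ}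
    (hb : ∀ u, |b u| ≤ M)
    (h_conv : ∀ l > 0, Tendsto (fun v => ∫ u in Ioi (0 : ℝ), b u * fejerKernel (l * (u - v)))
      atTop (𝓝 0)) {ε η : ℝ} (hε : 0 < ε) (hη : 0 < η) :
    ∀ᶠ v in atTop, ∃ u ∈ Icc (v - η) (v + η), b u < ε := by
  -- For this `l` the kernel has so much of its mass in the window that `ε ≤ b` there would keep the
  -- integral away from `0`.
  obtain ⟨l, hl, h_lt⟩ := exists_window_fejerKernel (M := M) hε hη
  filter_upwards [(h_conv l hl).eventually_lt_const (mul_pos (inv_pos.2 hl) (sub_pos.2 h_lt)),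
    eventually_ge_atTop η] with v h_small hv
  by_contra! h_window
  have h_le := window_le_integral_mul hbm hb (integrable_fejerKernel_comp_mul_sub hl.ne' v)
    (fun u => fejerKernel_nonneg _) hη.le hv h_window
  rw [integral_fejerKernel_comp_mul_sub hl, intervalIntegral_fejerKernel_comp_mul_sub hl.ne']
    at h_le
  linarith

lemma eventually_lt_of_monotone_mul_exp {a : ℝ → ℝ} {c x : ℝ} (ha0 : ∀ u, 0 ≤ a u)
    (h_mono : Monotone fun u => a u * Real.exp u)
    (h_window : ∀ η > 0, ∀ᶠ v in atTop, ∃ u ∈ Icc (v - η) (v + η), a u < c + η) (hx : c < x) :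
    ∀ᶠ v in atTop, a v < x := by
  have h_cont : Continuous fun η : ℝ => (c + η) * Real.exp (2 * η) := by fun_prop
  have h_lim : Tendsto (fun η : ℝ => (c + η) * Real.exp (2 * η)) (𝓝[>] 0) (𝓝 c) := by
    simpa using (h_cont.tendsto 0).mono_left nhdsWithin_le_nhds
  obtain ⟨η, h_lt, hη⟩ := ((h_lim.eventually_lt_const hx).and self_mem_nhdsWithin).exists
  filter_upwards [(tendsto_atTop_add_const_right atTop η tendsto_id).eventually
    (h_window η hη)] with v ⟨u, hu, hau⟩
  simp only [id_eq, add_sub_cancel_right, mem_Icc] at hu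
  calc a v ≤ a u * Real.exp (u - v) := by
        rw [Real.exp_sub, ← mul_div_assoc, le_div_iff₀ (Real.exp_pos v)]
        exact h_mono hu.1
    _ ≤ a u * Real.exp (2 * η) := by
        gcongr
        · exact ha0 u
        · linarith
    _ ≤ (c + η) * Real.exp (2 * η) := by gcongr
    _ < x := h_lt

lemma eventually_gt_of_monotone_mul_exp {a : ℝ → ℝ} {c x : ℝ} (ha0 : ∀ u, 0 ≤ a u)
    (h_mono : Monotone fun u => a u * Real.exp u)
    (h_window : ∀ η > 0, ∀ᶠ v in atTop, ∃ u ∈ Icc (v - η) (v + η), c - η < a u) (hx : x < c) :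
    ∀ᶠ v in atTop, x < a v := by
  have h_cont : Continuous fun η : ℝ => (c - η) * Real.exp (-(2 * η)) := by fun_prop
  have h_lim : Tendsto (fun η : ℝ => (c - η) * Real.exp (-(2 * η))) (𝓝[>] 0) (𝓝 c) := by
    simpa using (h_cont.tendsto 0).mono_left nhdsWithin_le_nhds
  obtain ⟨η, h_lt, hη⟩ := ((h_lim.eventually_const_lt hx).and self_mem_nhdsWithin).exists
  filter_upwards [(tendsto_atTop_add_const_right atTop (-η) tendsto_id).eventually
    (h_window η hη)] with v ⟨u, hu, hau⟩
  simp only [id_eq, neg_add_cancel_right, mem_Icc] at hu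
  calc x < (c - η) * Real.exp (-(2 * η)) := h_lt
    _ ≤ a u * Real.exp (-(2 * η)) := by gcongr
    _ ≤ a u * Real.exp (u - v) := by
        gcongr
        · exact ha0 u
        · linarith
    _ ≤ a v := by
        rw [Real.exp_sub, ← mul_div_assoc, div_le_iff₀ (Real.exp_pos v)]
        exact h_mono hu.2

theorem tendsto_of_continuousOn_laplaceTransform {a : ℝ → ℝ} {c C : ℝ} (ha0 : ∀ u, 0 ≤ a u)
    (haC : ∀ u, a u ≤ C) (h_mono : Monotone fun u => a u * Real.exp u) {H : ℂ → ℂ}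
    (hH : ContinuousOn H {s | 0 ≤ s.re})
    (h_eq : EqOn H (laplaceTransform fun u => a u - c) {s | 0 < s.re}) :
    Tendsto a atTop (𝓝 c) := by
  have ham : Measurable a := by
    have h_exp (u : ℝ) : a u = a u * Real.exp u * Real.exp (-u) := by
      rw [mul_assoc, ← Real.exp_add, add_neg_cancel, Real.exp_zero, mul_one]
    rw [funext h_exp]
    exact h_mono.measurable.mul (by fun_prop)
  have h_bound (u : ℝ) : |a u - c| ≤ C + |c| :=
    (abs_sub _ _).trans (by rw [abs_of_nonneg (ha0 u)]; linarith [haC u])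
  have h_conv (l : ℝ) (hl : l > 0) : Tendsto
      (fun v => ∫ u in Ioi (0 : ℝ), (a u - c) * fejerKernel (l * (u - v))) atTop (𝓝 0) :=
    tendsto_integral_mul_fejerKernel (by fun_prop) h_bound hH h_eq hl
  have h_conv_neg (l : ℝ) (hl : l > 0) : Tendsto
      (fun v => ∫ u in Ioi (0 : ℝ), (c - a u) * fejerKernel (l * (u - v))) atTop (𝓝 0) := by
    simpa only [← integral_neg, neg_zero, ← neg_mul, neg_sub] using (h_conv l hl).neg
  refine tendsto_order.2 ⟨fun x hx => eventually_gt_of_monotone_mul_exp ha0 h_mono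
    (fun η hη => ?_) hx, fun x hx => eventually_lt_of_monotone_mul_exp ha0 h_mono
    (fun η hη => ?_) hx⟩
  · filter_upwards [eventually_exists_lt_of_tendsto_fejerKernel (by fun_prop)
      (fun u => (abs_sub_comm _ _).trans_le (h_bound u)) h_conv_neg hη hη] with v ⟨u, hu, h_lt⟩
    exact ⟨u, hu, by linarith⟩
  · filter_upwards [eventually_exists_lt_of_tendsto_fejerKernel (by fun_prop) h_bound h_conv
      hη hη] with v ⟨u, hu, h_lt⟩
    exact ⟨u, hu, by linarith⟩

end LaplaceTauberian

section WienerIkehara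

open MeasureTheory Set Topology Complex

lemma add_one_ne_zero_of_re_nonneg {s : ℂ} (hs : 0 ≤ s.re) : s + 1 ≠ 0 := by
  refine ne_of_apply_ne re (ne_of_gt ?_)
  simpa using add_pos_of_nonneg_of_pos hs one_pos

variable {f : ℕ → ℝ} {C : ℝ}

lemma laplaceTransform_sum_floor_exp (hf : ∀ n, 0 ≤ f n)
    (hC : ∀ x : ℝ, 0 ≤ x → ∑ k ∈ Finset.Icc 1 ⌊x⌋₊, f k ≤ C * x) {s : ℂ} (hs : 0 < s.re) :
    laplaceTransform (fun u => (∑ k ∈ Finset.Icc 1 ⌊Real.exp u⌋₊, f k) * Real.exp (-u)) s =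
      LSeries (fun n => f n) (s + 1) / (s + 1) := by
  have h_bigO : (fun n : ℕ => ∑ k ∈ Finset.Icc 1 n, f k) =O[atTop] fun n => (n : ℝ) ^ (1 : ℝ) := by
    refine Asymptotics.IsBigO.of_bound C (Eventually.of_forall fun n => ?_)
    rw [Real.rpow_one, Real.norm_of_nonneg (Finset.sum_nonneg fun _ _ => hf _),
      Real.norm_of_nonneg n.cast_nonneg]
    simpa using hC n n.cast_nonneg
  rw [LSeries_eq_mul_integral_of_nonneg f zero_le_one (by simpa using hs) h_bigO hf,
    mul_div_cancel_left₀ _ (add_one_ne_zero_of_re_nonneg hs.le), ← Real.exp_zero,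
    ← integral_comp_exp_Ioi, laplaceTransform]
  congr 1 with u
  have h_pow : (Real.exp u : ℂ) ^ (-(s + 1 + 1)) = cexp (u * -(s + 1 + 1)) := by
    rw [ofReal_exp, cpow_def_of_ne_zero (exp_ne_zero _), ← ofReal_exp, ← ofReal_log
      (Real.exp_pos u).le, Real.log_exp]
  have h_exp : cexp (-u) * cexp (-s * u) = cexp u * cexp (u * -(s + 1 + 1)) := by
    rw [← exp_add, ← exp_add]
    ring_nf
  rw [h_pow, real_smul]
  push_cast
  linear_combination (∑ k ∈ Finset.Icc 1 ⌊Real.exp u⌋₊, (f k : ℂ)) * h_exp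

lemma laplaceTransform_sub_const {a : ℝ → ℝ} (ham : Measurable a) (ha : ∀ u, |a u| ≤ C) (c : ℝ)
    {s : ℂ} (hs : 0 < s.re) :
    laplaceTransform (fun u => a u - c) s = laplaceTransform a s - c / s := by
  have h_exp : IntegrableOn (fun u : ℝ => cexp (-s * u)) (Ioi 0) :=
    integrableOn_exp_mul_complex_Ioi (by simpa using hs) 0
  have h_integral : ∫ u in Ioi (0 : ℝ), cexp (-s * u) = 1 / s := by
    simpa using integral_exp_mul_complex_Ioi (a := -s) (by simpa using hs) 0
  have h_a : IntegrableOn (fun u : ℝ => (a u : ℂ) * cexp (-s * u)) (Ioi 0) :=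
    h_exp.bdd_mul (c := C) (Measurable.aestronglyMeasurable (by fun_prop))
      (ae_of_all _ fun u => by simpa using ha u)
  simp only [laplaceTransform, ofReal_sub, sub_mul]
  rw [integral_sub h_a (h_exp.const_mul _), integral_const_mul, h_integral, mul_one_div]

theorem tendsto_sum_div_of_continuousOn_LSeries (hf : ∀ n, 0 ≤ f n)
    (hC : ∀ x : ℝ, 0 ≤ x → ∑ k ∈ Finset.Icc 1 ⌊x⌋₊, f k ≤ C * x) {c : ℝ} {G : ℂ → ℂ}
    (hG : ContinuousOn G {s | 1 ≤ s.re})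
    (h_eq : EqOn G (fun s => LSeries (fun n => f n) s - c / (s - 1)) {s | 1 < s.re}) :
    Tendsto (fun x : ℝ => (∑ k ∈ Finset.Icc 1 ⌊x⌋₊, f k) / x) atTop (𝓝 c) := by
  let a : ℝ → ℝ := fun u => (∑ k ∈ Finset.Icc 1 ⌊Real.exp u⌋₊, f k) * Real.exp (-u)
  have h_sum_mono : Monotone fun u : ℝ => ∑ k ∈ Finset.Icc 1 ⌊Real.exp u⌋₊, f k := fun u v huv =>
    Finset.sum_le_sum_of_subset_of_nonneg (Finset.Icc_subset_Icc_right
      (Nat.floor_le_floor (Real.exp_le_exp.2 huv))) fun k _ _ => hf k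
  have ham : Measurable a := h_sum_mono.measurable.mul (by fun_prop)
  have ha0 (u : ℝ) : 0 ≤ a u :=
    mul_nonneg (Finset.sum_nonneg fun _ _ => hf _) (Real.exp_pos _).le
  have haC (u : ℝ) : a u ≤ C := by
    simpa only [a, Real.exp_neg, mul_inv_le_iff₀ (Real.exp_pos u)] using hC _ (Real.exp_pos u).le
  have h_mono : Monotone fun u => a u * Real.exp u := by
    simpa only [a, mul_assoc, ← Real.exp_add, neg_add_cancel, Real.exp_zero, mul_one]
      using h_sum_mono
  have h_lim : Tendsto a atTop (𝓝 c) := by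
    refine tendsto_of_continuousOn_laplaceTransform (H := fun s => (G (s + 1) - c) / (s + 1))
      ha0 haC h_mono ?_ fun s (hs : 0 < s.re) => ?_
    · exact ((hG.comp (by fun_prop) fun s hs => by simpa using hs).sub continuousOn_const).div
        (by fun_prop) fun s hs => add_one_ne_zero_of_re_nonneg hs
    · have hs0 : s ≠ 0 := fun h => by simp [h] at hs
      have hs1 := add_one_ne_zero_of_re_nonneg hs.le
      dsimp only
      rw [laplaceTransform_sub_const ham (fun u => (abs_of_nonneg (ha0 u)).trans_le (haC u)) c hs,
        laplaceTransform_sum_floor_exp hf hC hs, h_eq (by simpa using hs)]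
      simp only [add_sub_cancel_right]
      field_simp
      ring
  refine (h_lim.comp Real.tendsto_log_atTop).congr' ?_
  filter_upwards [eventually_gt_atTop 0] with x hx
  simp only [a, Function.comp_apply]
  rw [Real.exp_neg, Real.exp_log hx, div_eq_mul_inv]

end WienerIkehara

section PrimesInResidueClass

open Finset ArithmeticFunction ArithmeticFunction.vonMangoldt Topology Nat

variable {q : ℕ}

/-- The Chebyshev function `θ(x; q, a)`, counting with weight `log p` the primes `p ≤ x` in the
residue class `a` modulo `q`. -/
noncomputable def thetaResidue (a : ZMod q) (x : ℝ) : ℝ :=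
  ∑ p ∈ Ioc 0 ⌊x⌋₊ with Nat.Prime p ∧ (p : ZMod q) = a, Real.log p

lemma thetaResidue_nonneg (a : ZMod q) (x : ℝ) : 0 ≤ thetaResidue a x :=
  sum_nonneg fun _ _ => Real.log_natCast_nonneg _

lemma thetaResidue_mod_one (a : ZMod 1) : thetaResidue a = Chebyshev.theta := by
  ext x
  simp only [thetaResidue, Chebyshev.theta, Subsingleton.elim _ a, and_true]

lemma sum_residueClass_sub_thetaResidue (a : ZMod q) (x : ℝ) :
    ∑ n ∈ Icc 1 ⌊x⌋₊, residueClass a n - thetaResidue a x =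
      ∑ n ∈ Ioc 0 ⌊x⌋₊ with ¬n.Prime, residueClass a n := by
  rw [sub_eq_iff_eq_add', ← sum_filter_add_sum_filter_not (Icc 1 ⌊x⌋₊) Nat.Prime, thetaResidue,
    ← filter_filter, sum_filter (fun n : ℕ => (n : ZMod q) = a)]
  congr 1
  refine sum_congr rfl fun p hp => ?_
  rw [residueClass, Set.indicator_apply, vonMangoldt_apply_prime (mem_filter.1 hp).2]
  rfl

lemma sum_residueClass_sub_thetaResidue_nonneg (a : ZMod q) (x : ℝ) :
    0 ≤ ∑ n ∈ Icc 1 ⌊x⌋₊, residueClass a n - thetaResidue a x := by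
  rw [sum_residueClass_sub_thetaResidue]
  exact sum_nonneg fun n _ => residueClass_nonneg a n

lemma sum_residueClass_sub_thetaResidue_le (a : ZMod q) (x : ℝ) :
    ∑ n ∈ Icc 1 ⌊x⌋₊, residueClass a n - thetaResidue a x ≤
      Chebyshev.psi x - Chebyshev.theta x := by
  rw [sum_residueClass_sub_thetaResidue, Chebyshev.psi_sub_theta_eq_sum_not_prime]
  exact sum_le_sum fun n _ => residueClass_le a n

lemma tendsto_sum_residueClass_div_atTop [NeZero q] {a : ZMod q} (ha : IsUnit a) :
    Tendsto (fun x : ℝ => (∑ n ∈ Icc 1 ⌊x⌋₊, residueClass a n) / x) atTop (𝓝 (φ q : ℝ)⁻¹) := by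
  refine tendsto_sum_div_of_continuousOn_LSeries (C := Real.log 4 + 4)
    (residueClass_nonneg a) (fun x hx => ?_) (continuousOn_LFunctionResidueClassAux a) ?_
  · exact (sum_le_sum fun n _ => residueClass_le a n).trans (Chebyshev.psi_le_const_mul_self hx)
  · simpa using eqOn_LFunctionResidueClassAux ha

theorem tendsto_thetaResidue_div_atTop [NeZero q] {a : ZMod q} (ha : IsUnit a) :
    Tendsto (fun x : ℝ => thetaResidue a x / x) atTop (𝓝 (φ q : ℝ)⁻¹) := by
  obtain ⟨C, hC⟩ := Chebyshev.psi_sub_theta_le_mul_sqrt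
  have h_sqrt : Tendsto (fun x : ℝ => C * (√x / x)) atTop (𝓝 0) := by
    simpa only [Real.sqrt_div_self, mul_zero, Pi.inv_apply] using
      Real.tendsto_sqrt_atTop.inv_tendsto_atTop.const_mul C
  have h_diff : Tendsto
      (fun x : ℝ => (∑ n ∈ Icc 1 ⌊x⌋₊, residueClass a n - thetaResidue a x) / x) atTop (𝓝 0) := by
    refine squeeze_zero' ?_ ?_ h_sqrt <;> filter_upwards [eventually_ge_atTop 0] with x hx
    · exact div_nonneg (sum_residueClass_sub_thetaResidue_nonneg a x) hx
    · rw [← mul_div_assoc]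
      gcongr
      exact (sum_residueClass_sub_thetaResidue_le a x).trans (hC x)
  simpa only [← sub_div, sub_sub_cancel, sub_zero] using
    (tendsto_sum_residueClass_div_atTop ha).sub h_diff

theorem tendsto_theta_div_atTop :
    Tendsto (fun x : ℝ => Chebyshev.theta x / x) atTop (𝓝 1) := by
  simpa [thetaResidue_mod_one] using tendsto_thetaResidue_div_atTop (isUnit_one (M := ZMod 1))

end PrimesInResidueClass

section PrimesOneModBound

open Finset Topology Nat

variable {d : ℕ}

lemma natCast_zmod_eq_one_iff_dvd_sub_one {n : ℕ} (hn : 1 ≤ n) : (n : ZMod d) = 1 ↔ d ∣ n - 1 := by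
  rw [← ZMod.natCast_eq_zero_iff, Nat.cast_sub hn, Nat.cast_one, sub_eq_zero]

lemma dvd_prod_add_mul_of_coprime {m n : ℕ} (hm : m.Coprime d) (h : m ∣ n !) (a : ℕ) :
    m ∣ ∏ k ∈ range n, (a + d * k) := by
  have : NeZero m := ⟨ne_zero_of_dvd_ne_zero n.factorial_ne_zero h⟩
  -- Modulo `m` the progression is `d` times a run of consecutive integers.
  obtain ⟨u, hu⟩ := ZMod.natCast_zmod_surjective ((a : ZMod m) * (d : ZMod m)⁻¹)
  have h_start : (d : ZMod m) * u = a := by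
    rw [hu, mul_left_comm, ZMod.coe_mul_inv_eq_one d hm.symm, mul_one]
  have h_prod : ((∏ k ∈ range n, (a + d * k) : ℕ) : ZMod m) =
      ((d ^ n * u.ascFactorial n : ℕ) : ZMod m) := by
    push_cast [ascFactorial_eq_prod_range]
    simp only [← h_start, ← mul_add, prod_mul_distrib, prod_const, card_range]
  rw [← ZMod.natCast_eq_zero_iff, h_prod, ZMod.natCast_eq_zero_iff]
  exact (h.trans (factorial_dvd_ascFactorial _ _)).mul_left _

lemma le_of_prime_pow_dvd_factorial {p e n : ℕ} (hp : p.Prime) (h : p ^ e ∣ n !) : e ≤ n := by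
  have : Fact p.Prime := ⟨hp⟩
  exact ((padicValNat_dvd_iff_le n.factorial_ne_zero).1 h).trans
    (padicValNat_factorial_le (p := p) n)

lemma factorial_dvd_pow_mul_prod_add_mul (a d n : ℕ) :
    n ! ∣ d ^ n * ∏ k ∈ range n, (a + d * k) := by
  refine (Nat.dvd_iff_prime_pow_dvd_dvd _ _).2 fun p e hp h => ?_
  by_cases hpd : p ∣ d
  · exact ((pow_dvd_pow p (le_of_prime_pow_dvd_factorial hp h)).trans
      (pow_dvd_pow_of_dvd hpd n)).mul_right _
  · exact (dvd_prod_add_mul_of_coprime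
      (((Nat.Prime.coprime_iff_not_dvd hp).2 hpd).pow_left e) h a).mul_left _

lemma prod_succ_add_mul_le (hd : d ≠ 0) (n : ℕ) :
    ∏ k ∈ range n, (d + 1 + d * k) ≤ d ^ n * (n + 1)! := by
  induction n with
  | zero => simp
  | succ n ih =>
    have h_term : d + 1 + d * n ≤ d * (n + 2) := by
      linarith [Nat.one_le_iff_ne_zero.2 hd]
    calc ∏ k ∈ range (n + 1), (d + 1 + d * k)
        ≤ (d ^ n * (n + 1)!) * (d * (n + 2)) := by
          rw [prod_range_succ]
          exact Nat.mul_le_mul ih h_term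
      _ = d ^ (n + 1) * (n + 2)! := by
          rw [factorial_succ (n + 1)]
          ring

lemma prod_primes_one_mod_mul_factorial_dvd (hd : d ≠ 0) (N : ℕ) :
    (∏ p ∈ Ioc (N / d) N with Nat.Prime p ∧ (p : ZMod d) = 1, p) * (N / d)! ∣
      d ^ (N / d) * ∏ k ∈ range (N / d), (d + 1 + d * k) := by
  refine Nat.Coprime.mul_dvd_of_dvd_of_dvd ?_ ?_ (factorial_dvd_pow_mul_prod_add_mul _ _ _)
  · refine Nat.Coprime.prod_left fun p hp => ?_
    simp only [mem_filter, mem_Ioc] at hp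
    exact (Nat.Prime.coprime_iff_not_dvd hp.2.1).2 fun h =>
      hp.1.1.not_ge (hp.2.1.dvd_factorial.1 h)
  · refine (prod_primes_dvd _ (fun p hp => (mem_filter.1 hp).2.1.prime) fun p hp => ?_).mul_left _
    simp only [mem_filter, mem_Ioc] at hp
    obtain ⟨k, hk⟩ := (natCast_zmod_eq_one_iff_dvd_sub_one hp.2.1.one_le).1 hp.2.2
    obtain ⟨j, rfl⟩ : ∃ j, k = j + 1 := by
      refine Nat.exists_eq_succ_of_ne_zero fun hk0 => hp.2.1.one_lt.not_ge ?_
      rw [hk0, mul_zero, Nat.sub_eq_zero_iff_le] at hk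
      exact hk
    have h_eq : p = d + 1 + d * j := by
      rw [← Nat.sub_add_cancel hp.2.1.one_le, hk]
      ring
    rw [h_eq]
    refine dvd_prod_of_mem _ (mem_range.2 ?_)
    rw [Nat.lt_iff_add_one_le, Nat.le_div_iff_mul_le (Nat.pos_of_ne_zero hd), mul_comm, ← hk]
    exact (Nat.sub_le p 1).trans hp.1.2

lemma prod_primes_one_mod_le (hd : d ≠ 0) (N : ℕ) :
    ∏ p ∈ Ioc (N / d) N with Nat.Prime p ∧ (p : ZMod d) = 1, p ≤
      d ^ (2 * (N / d)) * (N / d + 1) := by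
  have h_le := Nat.le_of_dvd (Nat.mul_pos (pow_pos (Nat.pos_of_ne_zero hd) _)
    (prod_pos fun _ _ => by positivity)) (prod_primes_one_mod_mul_factorial_dvd hd N)
  refine Nat.le_of_mul_le_mul_right ?_ (factorial_pos (N / d))
  calc _ ≤ d ^ (N / d) * ∏ k ∈ range (N / d), (d + 1 + d * k) := h_le
    _ ≤ d ^ (N / d) * (d ^ (N / d) * (N / d + 1)!) :=
        Nat.mul_le_mul_left _ (prod_succ_add_mul_le hd _)
    _ = d ^ (2 * (N / d)) * (N / d + 1) * (N / d)! := by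
        rw [factorial_succ]
        ring

lemma sum_log_primes_one_mod_le (hd : d ≠ 0) (N : ℕ) :
    ∑ p ∈ Ioc (N / d) N with Nat.Prime p ∧ (p : ZMod d) = 1, Real.log p ≤
      (N / d : ℕ) * (2 * Real.log d + 1) := by
  have h_prime {p : ℕ} (hp : p ∈ {p ∈ Ioc (N / d) N | Nat.Prime p ∧ (p : ZMod d) = 1}) :
      p.Prime := (mem_filter.1 hp).2.1
  rw [← Real.log_prod fun p hp => Nat.cast_ne_zero.2 (h_prime hp).ne_zero]
  calc Real.log (∏ p ∈ Ioc (N / d) N with Nat.Prime p ∧ (p : ZMod d) = 1, (p : ℝ))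
      ≤ Real.log (d ^ (2 * (N / d)) * ((N / d : ℕ) + 1)) :=
        Real.log_le_log (prod_pos fun p hp => Nat.cast_pos.2 (h_prime hp).pos)
          (by rw [← Nat.cast_prod]; exact_mod_cast prod_primes_one_mod_le hd N)
    _ = 2 * (N / d : ℕ) * Real.log d + Real.log ((N / d : ℕ) + 1) := by
        rw [Real.log_mul (by positivity) (by positivity), Real.log_pow]
        push_cast
        ring
    _ ≤ (N / d : ℕ) * (2 * Real.log d + 1) := by
        linarith [Real.log_le_sub_one_of_pos (by positivity : (0 : ℝ) < (N / d : ℕ) + 1)]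

lemma thetaResidue_one_le_theta_add (N : ℕ) :
    thetaResidue (1 : ZMod d) N ≤ Chebyshev.theta (N / d : ℕ) +
      ∑ p ∈ Ioc (N / d) N with Nat.Prime p ∧ (p : ZMod d) = 1, Real.log p := by
  rw [thetaResidue, Chebyshev.theta, Nat.floor_natCast, Nat.floor_natCast,
    ← sum_sdiff (filter_subset_filter _ (Ioc_subset_Ioc_left (Nat.zero_le (N / d))))]
  refine add_le_add (sum_le_sum_of_subset_of_nonneg (fun p hp => ?_)
    fun p _ _ => Real.log_natCast_nonneg p) le_rfl
  simp only [Finset.mem_sdiff, mem_filter, mem_Ioc] at hp ⊢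
  exact ⟨⟨hp.1.1.1, not_lt.1 fun h => hp.2 ⟨⟨h, hp.1.1.2⟩, hp.1.2⟩⟩, hp.1.2.1⟩

lemma log_four_le_two : Real.log 4 ≤ 2 := by
  rw [show (4 : ℝ) = 2 ^ 2 by norm_num, Real.log_pow, Nat.cast_two]
  linarith [Real.log_two_lt_d9]

theorem thetaResidue_one_le (hd : d ≠ 0) (N : ℕ) :
    thetaResidue (1 : ZMod d) N ≤ N / d * (2 * Real.log d + 3) := by
  have h_theta := Chebyshev.theta_le_log4_mul_x (Nat.cast_nonneg (α := ℝ) (N / d))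
  calc thetaResidue (1 : ZMod d) N
      ≤ 2 * (N / d : ℕ) + (N / d : ℕ) * (2 * Real.log d + 1) :=
        (thetaResidue_one_le_theta_add N).trans (add_le_add
          (h_theta.trans (by gcongr; exact log_four_le_two)) (sum_log_primes_one_mod_le hd N))
    _ = (N / d : ℕ) * (2 * Real.log d + 3) := by ring
    _ ≤ N / d * (2 * Real.log d + 3) := by
        gcongr
        exact Nat.cast_div_le

lemma thetaResidue_one_eq_sum_primesLE (d N : ℕ) :
    thetaResidue (1 : ZMod d) N = ∑ p ∈ primesLE N with d ∣ p - 1, Real.log p := by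
  rw [thetaResidue, Nat.floor_natCast]
  refine sum_congr ?_ fun _ _ => rfl
  ext p
  simp only [mem_filter, mem_Ioc, mem_primesLE]
  constructor
  · rintro ⟨⟨h_pos, h_le⟩, hp, h_one⟩
    exact ⟨⟨h_le, hp⟩, (natCast_zmod_eq_one_iff_dvd_sub_one h_pos).1 h_one⟩
  · rintro ⟨⟨h_le, hp⟩, h_dvd⟩
    exact ⟨⟨hp.pos, h_le⟩, hp, (natCast_zmod_eq_one_iff_dvd_sub_one hp.pos).2 h_dvd⟩

lemma thetaResidue_one_eq_zero_of_notMem {d N : ℕ} (h : d ∉ Ico 1 N) :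
    thetaResidue (1 : ZMod d) N = 0 := by
  rw [thetaResidue_one_eq_sum_primesLE, filter_eq_empty_iff.2, sum_empty]
  intro p hp h_dvd
  obtain ⟨h_le, hp⟩ := mem_primesLE.1 hp
  have h_pos : 0 < p - 1 := Nat.sub_pos_of_lt hp.one_lt
  exact h (mem_Ico.2 ⟨pos_of_dvd_of_pos h_dvd h_pos,
    ((Nat.le_of_dvd h_pos h_dvd).trans_lt (Nat.sub_one_lt hp.ne_zero)).trans_le h_le⟩)

lemma thetaResidue_one_div_le (d N : ℕ) :
    thetaResidue (1 : ZMod d) N / N ≤ (2 * Real.log d + 3) / d := by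
  have h_nonneg : 0 ≤ (2 * Real.log d + 3) / d := by
    have := Real.log_natCast_nonneg d
    positivity
  by_cases h : d ∈ Ico 1 N
  · obtain ⟨hd, hN⟩ := mem_Ico.1 h
    rw [div_le_iff₀ (Nat.cast_pos.2 (Nat.zero_lt_of_lt hN))]
    exact (thetaResidue_one_le (Nat.one_le_iff_ne_zero.1 hd) N).trans_eq (by ring)
  · rwa [thetaResidue_one_eq_zero_of_notMem h, zero_div]

lemma tendsto_thetaResidue_one_div (d : ℕ) :
    Tendsto (fun N : ℕ => thetaResidue (1 : ZMod d) N / N) atTop (𝓝 (φ d : ℝ)⁻¹) := by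
  rcases eq_or_ne d 0 with rfl | hd
  · simp [thetaResidue_one_eq_zero_of_notMem]
  · have : NeZero d := ⟨hd⟩
    exact (tendsto_thetaResidue_div_atTop isUnit_one).comp tendsto_natCast_atTop_atTop

lemma inv_totient_le (d : ℕ) : (φ d : ℝ)⁻¹ ≤ (2 * Real.log d + 3) / d :=
  le_of_tendsto' (tendsto_thetaResidue_one_div d) (thetaResidue_one_div_le d)

end PrimesOneModBound

section ShiftedPrimes

open Finset Topology Nat

lemma sum_primesLE_sum_divisors_mul_log (g : ℕ → ℝ) (N : ℕ) :
    ∑ p ∈ primesLE N, (∑ d ∈ (p - 1).divisors, g d) * Real.log p =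
      ∑' d, g d * thetaResidue (1 : ZMod d) N := by
  rw [tsum_eq_sum (s := Ico 1 N) fun d hd => by
    rw [thetaResidue_one_eq_zero_of_notMem hd, mul_zero]]
  simp only [thetaResidue_one_eq_sum_primesLE, mul_sum, sum_mul]
  refine sum_comm' fun p d => ?_
  simp only [mem_filter, mem_primesLE, mem_divisors, mem_Ico]
  constructor
  · rintro ⟨⟨h_le, hp⟩, h_dvd, h_ne⟩
    have := Nat.le_of_dvd (Nat.pos_of_ne_zero h_ne) h_dvd
    have := Nat.pos_of_dvd_of_pos h_dvd (Nat.pos_of_ne_zero h_ne)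
    exact ⟨⟨⟨h_le, hp⟩, h_dvd⟩, by omega, by omega⟩
  · rintro ⟨⟨⟨h_le, hp⟩, h_dvd⟩, -⟩
    exact ⟨⟨h_le, hp⟩, h_dvd, Nat.sub_ne_zero_of_lt hp.one_lt⟩

theorem tendsto_sum_primesLE_sum_divisors_mul_log_div {g : ℕ → ℝ}
    (hg : Summable fun d : ℕ => ‖g d‖ * ((2 * Real.log d + 3) / d)) :
    Tendsto (fun N : ℕ => (∑ p ∈ primesLE N, (∑ d ∈ (p - 1).divisors, g d) * Real.log p) / N)
      atTop (𝓝 (∑' d, g d * (φ d : ℝ)⁻¹)) := by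
  simp only [sum_primesLE_sum_divisors_mul_log, ← tsum_div_const, mul_div_assoc]
  refine tendsto_tsum_of_dominated_convergence hg
    (fun d => (tendsto_thetaResidue_one_div d).const_mul (g d)) (.of_forall fun N d => ?_)
  rw [norm_mul, Real.norm_of_nonneg (div_nonneg (thetaResidue_nonneg _ _) N.cast_nonneg)]
  exact mul_le_mul_of_nonneg_left (thetaResidue_one_div_le d N) (norm_nonneg _)

end ShiftedPrimes

section MoebiusSums

open Finset ArithmeticFunction ArithmeticFunction.Moebius Topology Nat

lemma totient_div_self_eq_sum_moebius_div (n : ℕ) :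
    (φ n : ℝ) / n = ∑ d ∈ n.divisors, (μ d : ℝ) / d := by
  rcases n.eq_zero_or_pos with rfl | hn
  · simp
  have h_inv := (sum_eq_iff_sum_mul_moebius_eq (R := ℝ) (f := fun n => φ n) (g := fun n => n)).1
    (fun n _ => mod_cast n.sum_totient) n hn
  rw [← h_inv, sum_divisorsAntidiagonal fun a b => (μ a : ℝ) * (b : ℝ), sum_div]
  refine sum_congr rfl fun d hd => ?_
  have hn' : (n : ℝ) ≠ 0 := Nat.cast_ne_zero.2 hn.ne'
  rw [Nat.cast_div (dvd_of_mem_divisors hd) (Nat.cast_ne_zero.2 (pos_of_mem_divisors hd).ne')]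
  field_simp

theorem tsum_moebius_mul_eq_tprod {h : ℕ → ℝ} (h_one : h 1 = 1)
    (h_mul : ∀ {m n : ℕ}, m.Coprime n → h (m * n) = h m * h n)
    (h_summable : Summable fun n => ‖μ n * h n‖) :
    ∑' n, μ n * h n = ∏' p : Nat.Primes, (1 - h p) := by
  rw [← EulerProduct.eulerProduct_tprod (by simp [h_one]) (fun {m n} hmn => ?_) h_summable
    (by simp)]
  · refine tprod_congr fun p => ?_
    rw [tsum_eq_sum (s := range 2) fun e he => ?_]
    · simp [sum_range_succ, h_one, moebius_apply_prime p.2, sub_eq_add_neg]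
    · have he : 2 ≤ e := not_lt.1 (mem_range.not.1 he)
      rw [moebius_apply_prime_pow p.2 (by omega), if_neg (by omega), Int.cast_zero, zero_mul]
  · rw [isMultiplicative_moebius.map_mul_of_coprime hmn, h_mul hmn, Int.cast_mul]
    ring

lemma summable_one_div_mul_log_div :
    Summable fun d : ℕ => 1 / (d : ℝ) * ((2 * Real.log d + 3) / d) := by
  refine ((Real.summable_one_div_nat_rpow.2 (by norm_num : (1 : ℝ) < 3 / 2)).mul_left 7
    ).of_nonneg_of_le (fun d => ?_) fun d => ?_
  · have := Real.log_natCast_nonneg d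
    positivity
  rcases d.eq_zero_or_pos with rfl | hd
  · simp
  have hd' : (1 : ℝ) ≤ d := Nat.one_le_cast.2 hd
  have h_log : Real.log d ≤ (d : ℝ) ^ (1 / 2 : ℝ) / (1 / 2) :=
    Real.log_le_rpow_div d.cast_nonneg (by norm_num)
  have h_one : (1 : ℝ) ≤ (d : ℝ) ^ (1 / 2 : ℝ) := Real.one_le_rpow hd' (by norm_num)
  have h_mul : (d : ℝ) ^ (3 / 2 : ℝ) * (d : ℝ) ^ (1 / 2 : ℝ) = d * d := by
    rw [← Real.rpow_add (by positivity), ← sq]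
    norm_num
  calc 1 / (d : ℝ) * ((2 * Real.log d + 3) / d)
      ≤ 1 / d * (7 * (d : ℝ) ^ (1 / 2 : ℝ) / d) := by gcongr; linarith
    _ = 7 * (1 / (d : ℝ) ^ (3 / 2 : ℝ)) := by
      field_simp
      linarith

lemma norm_moebius_div_le (d : ℕ) : ‖(μ d : ℝ) / d‖ ≤ 1 / d := by
  rw [norm_div, Real.norm_natCast, Real.norm_eq_abs]
  gcongr
  exact_mod_cast abs_moebius_le_one

lemma tsum_moebius_div_mul_inv_totient :
    ∑' d : ℕ, (μ d : ℝ) / d * (φ d : ℝ)⁻¹ = artinConstant := by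
  simp only [div_eq_mul_inv, mul_assoc, ← mul_inv]
  rw [tsum_moebius_mul_eq_tprod (by simp) (fun hmn => ?_) ?_, artinConstant]
  · refine tprod_congr fun p => ?_
    rw [totient_prime p.2, Nat.cast_sub p.2.one_le, Nat.cast_one, one_div]
  · refine summable_one_div_mul_log_div.of_nonneg_of_le (fun _ => norm_nonneg _) fun d => ?_
    calc ‖(μ d : ℝ) * (d * φ d : ℝ)⁻¹‖ = ‖(μ d : ℝ) / d‖ * (φ d : ℝ)⁻¹ := by
          rw [mul_inv, ← mul_assoc, norm_mul, norm_inv, Real.norm_natCast, div_eq_mul_inv]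
      _ ≤ 1 / d * ((2 * Real.log d + 3) / d) := by
          gcongr
          exacts [norm_moebius_div_le d, inv_totient_le d]
  · rw [totient_mul hmn]
    push_cast
    ring

theorem tendsto_sum_primesLE_totient_div_mul_log_div :
    Tendsto (fun N : ℕ => (∑ p ∈ primesLE N, (φ (p - 1) : ℝ) / (p - 1 : ℕ) * Real.log p) / N)
      atTop (𝓝 artinConstant) := by
  simp only [totient_div_self_eq_sum_moebius_div, ← tsum_moebius_div_mul_inv_totient]
  refine tendsto_sum_primesLE_sum_divisors_mul_log_div <|
    summable_one_div_mul_log_div.of_nonneg_of_le (fun d => ?_) fun d => ?_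
  all_goals have := Real.log_natCast_nonneg d
  · positivity
  · gcongr
    exact norm_moebius_div_le d

end MoebiusSums

section WeightTransfer

open Finset Asymptotics Topology Nat

lemma isLittleO_sum_range_mul_of_monotone {e U ρ : ℕ → ℝ} (hU : Monotone U) (hU_nonneg : 0 ≤ U)
    (hρ : Monotone ρ) (hρ_nonneg : 0 ≤ ρ) (h_top : Tendsto (fun n => U n * ρ n) atTop atTop)
    (h : (fun n => ∑ i ∈ range (n + 1), e i) =o[atTop] U) :
    (fun n => ∑ i ∈ range (n + 1), e i * ρ i) =o[atTop] fun n => U n * ρ n := by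
  have h_telescope (n : ℕ) : ∑ i ∈ range n, (U (i + 1) * ρ (i + 1) - U i * ρ i) =
      U n * ρ n - U 0 * ρ 0 := sum_range_sub (fun i => U i * ρ i) n
  have h_step (i : ℕ) : U i * (ρ (i + 1) - ρ i) ≤ U (i + 1) * ρ (i + 1) - U i * ρ i := by
    linarith [mul_le_mul_of_nonneg_right (hU i.le_succ) (hρ_nonneg (i + 1))]
  have h_step_nonneg (i : ℕ) : 0 ≤ U i * (ρ (i + 1) - ρ i) :=
    mul_nonneg (hU_nonneg i) (sub_nonneg.2 (hρ i.le_succ))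
  have h_terms : (fun i => (∑ j ∈ range (i + 1), e j) * (ρ (i + 1) - ρ i)) =o[atTop]
      fun i => U (i + 1) * ρ (i + 1) - U i * ρ i :=
    (h.mul_isBigO (isBigO_refl _ _)).trans_isBigO <| IsBigO.of_bound 1 <| .of_forall fun i => by
      rw [one_mul, Real.norm_of_nonneg (h_step_nonneg i),
        Real.norm_of_nonneg ((h_step_nonneg i).trans (h_step i))]
      exact h_step i
  have h_sum : (fun n => ∑ i ∈ range n, (∑ j ∈ range (i + 1), e j) * (ρ (i + 1) - ρ i)) =o[atTop]
      fun n => U n * ρ n - U 0 * ρ 0 := by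
    simpa only [h_telescope] using h_terms.sum_range (fun i => (h_step_nonneg i).trans (h_step i))
      (by simpa only [h_telescope] using
        tendsto_atTop_add_const_right _ (-(U 0 * ρ 0)) h_top |>.congr fun n =>
          (sub_eq_add_neg _ _).symm)
  have h_const : (fun n => U n * ρ n - U 0 * ρ 0) =O[atTop] fun n => U n * ρ n :=
    (isBigO_refl _ _).sub
      (isLittleO_const_left.2 (.inr (tendsto_norm_atTop_atTop.comp h_top))).isBigO
  refine ((h.mul_isBigO (isBigO_refl ρ _)).sub (h_sum.trans_isBigO h_const)).congr_left fun n => ?_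
  simpa only [smul_eq_mul, mul_comm, add_tsub_cancel_right] using
    (sum_range_by_parts ρ e (n + 1)).symm

lemma sub_one_div_log_nonneg (n : ℕ) : 0 ≤ ((n : ℝ) - 1) / Real.log n := by
  rcases n.eq_zero_or_pos with rfl | hn
  · simp
  · exact div_nonneg (sub_nonneg.2 (Nat.one_le_cast.2 hn)) (Real.log_natCast_nonneg n)

lemma monotone_sub_one_div_log : Monotone fun n : ℕ => ((n : ℝ) - 1) / Real.log n := by
  intro m n hmn
  -- Since `log 0 = log 1 = 0`, the quotient has the junk value `0` at `0` and `1`.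
  rcases lt_or_ge 1 m with hm | hm
  · rcases hmn.eq_or_lt with rfl | hmn
    · rfl
    have hm : (1 : ℝ) < m := Nat.one_lt_cast.2 hm
    have hmn : (m : ℝ) < n := Nat.cast_lt.2 hmn
    have hn : (1 : ℝ) < n := hm.trans hmn
    have h_secant := strictConcaveOn_log_Ioi.secant_strict_mono (a := 1)
      (Set.mem_Ioi.2 one_pos) (one_pos.trans hm) (one_pos.trans hn) hm.ne' hn.ne' hmn
    simp only [Real.log_one, sub_zero] at h_secant
    simpa only [inv_div] using
      inv_anti₀ (div_pos (Real.log_pos hn) (sub_pos.2 hn)) h_secant.le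
  · refine le_of_eq_of_le ?_ (sub_one_div_log_nonneg n)
    interval_cases m <;> simp

lemma tendsto_mul_sub_one_div_log_atTop :
    Tendsto (fun n : ℕ => (n : ℝ) * (((n : ℝ) - 1) / Real.log n)) atTop atTop := by
  refine tendsto_atTop_mono' _ ?_ (tendsto_natCast_atTop_atTop (R := ℝ))
  filter_upwards [eventually_ge_atTop 2] with n hn
  have h_log : 0 < Real.log n := Real.log_pos (Nat.one_lt_cast.2 hn)
  refine le_mul_of_one_le_right n.cast_nonneg ((one_le_div h_log).2 ?_)
  exact Real.log_le_sub_one_of_pos (by positivity)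

lemma tendsto_theta_sub_theta_half_div :
    Tendsto (fun x : ℝ => (Chebyshev.theta x - Chebyshev.theta (x / 2)) / x) atTop
      (𝓝 (1 / 2)) := by
  have h_half := (tendsto_theta_div_atTop.comp (tendsto_id.atTop_div_const two_pos)).div_const 2
  convert tendsto_theta_div_atTop.sub h_half using 2 with x
  · simp only [Function.comp_apply, id_eq]
    ring
  · norm_num

lemma theta_sub_theta_half (N : ℕ) :
    Chebyshev.theta N - Chebyshev.theta (N / 2) =
      ∑ p ∈ primesLE N with N < 2 * p, Real.log p := by
  rw [Chebyshev.theta_eq_sum_primesLE_log, Chebyshev.theta_eq_sum_primesLE, sub_eq_iff_eq_add,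
    ← sum_filter_add_sum_filter_not (primesLE N) fun p => N < 2 * p]
  congr 1
  refine sum_congr ?_ fun _ _ => rfl
  ext p
  have h_half : p ≤ ⌊(N : ℝ) / 2⌋₊ ↔ 2 * p ≤ N := by
    rw [Nat.le_floor_iff (by positivity), le_div_iff₀' two_pos]
    norm_cast
  simp only [mem_filter, mem_primesLE, not_lt, h_half]
  constructor
  · rintro ⟨⟨-, hp⟩, h_le⟩
    exact ⟨h_le, hp⟩
  · rintro ⟨h_le, hp⟩
    exact ⟨⟨by omega, hp⟩, h_le⟩

lemma mul_theta_sub_theta_half_le_sum_primesLE_sub_one (N : ℕ) :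
    ((N : ℝ) - 1) / Real.log N / 2 * (Chebyshev.theta N - Chebyshev.theta (N / 2)) ≤
      ∑ p ∈ primesLE N, ((p : ℝ) - 1) := by
  rw [theta_sub_theta_half, mul_sum, sum_filter]
  refine sum_le_sum fun p hp => ?_
  obtain ⟨h_le, hp⟩ := mem_primesLE.1 hp
  have hp_pos : (0 : ℝ) < p := Nat.cast_pos.2 hp.pos
  split_ifs with h_lt
  · have h_log : Real.log p ≤ Real.log N := by gcongr
    have h_lt : (N : ℝ) + 1 ≤ 2 * p := mod_cast h_lt
    have h_log_pos : 0 < Real.log N :=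
      (Real.log_pos (Nat.one_lt_cast.2 hp.one_lt)).trans_le h_log
    have hN : (1 : ℝ) ≤ N := Nat.one_le_cast.2 (hp.one_le.trans h_le)
    calc ((N : ℝ) - 1) / Real.log N / 2 * Real.log p
        ≤ ((N : ℝ) - 1) / Real.log N / 2 * Real.log N := by
          have := sub_nonneg.2 hN
          gcongr
      _ = ((N : ℝ) - 1) / 2 := by field_simp
      _ ≤ p - 1 := by linarith
  · exact sub_nonneg.2 (Nat.one_le_cast.2 hp.one_le)

lemma isBigO_sum_primesLE_sub_one :
    (fun N : ℕ => (N : ℝ) * (((N : ℝ) - 1) / Real.log N)) =O[atTop]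
      fun N => ∑ p ∈ primesLE N, ((p : ℝ) - 1) := by
  refine IsBigO.of_bound 8 ?_
  filter_upwards [(tendsto_theta_sub_theta_half_div.comp
    tendsto_natCast_atTop_atTop).eventually_const_le (by norm_num : (1 / 4 : ℝ) < 1 / 2),
    eventually_gt_atTop 0] with N h_theta hN
  rw [Function.comp_apply, le_div_iff₀ (Nat.cast_pos.2 hN)] at h_theta
  have h_nonneg := sub_one_div_log_nonneg N
  rw [Real.norm_of_nonneg (by positivity)]
  calc (N : ℝ) * (((N : ℝ) - 1) / Real.log N)
      = 8 * (((N : ℝ) - 1) / Real.log N / 2 * (1 / 4 * N)) := by ring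
    _ ≤ 8 * ∑ p ∈ primesLE N, ((p : ℝ) - 1) := by
        gcongr
        exact (mul_le_mul_of_nonneg_left h_theta (by positivity)).trans
          (mul_theta_sub_theta_half_le_sum_primesLE_sub_one N)
    _ ≤ 8 * ‖∑ p ∈ primesLE N, ((p : ℝ) - 1)‖ := by
        gcongr
        exact Real.le_norm_self _

lemma isLittleO_sum_primesLE_mul_sub_one {g : ℕ → ℝ}
    (h : (fun N : ℕ => ∑ p ∈ primesLE N, g p * Real.log p) =o[atTop] fun N => (N : ℝ)) :
    (fun N => ∑ p ∈ primesLE N, g p * ((p : ℝ) - 1)) =o[atTop]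
      fun N => ∑ p ∈ primesLE N, ((p : ℝ) - 1) := by
  simp only [primesLE_eq_filter_range, sum_filter] at h
  refine (isLittleO_sum_range_mul_of_monotone Nat.mono_cast (fun n => n.cast_nonneg)
    monotone_sub_one_div_log sub_one_div_log_nonneg tendsto_mul_sub_one_div_log_atTop
    h).trans_isBigO isBigO_sum_primesLE_sub_one |>.congr_left fun N => ?_
  rw [primesLE_eq_filter_range, sum_filter]
  refine sum_congr rfl fun p _ => ?_
  split_ifs with hp
  · have h_log : Real.log p ≠ 0 := (Real.log_pos (Nat.one_lt_cast.2 hp.one_lt)).ne'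
    field_simp
  · exact zero_mul _

theorem tendsto_sum_primesLE_mul_sub_one_div {f : ℕ → ℝ} {A : ℝ}
    (h : Tendsto (fun N : ℕ => (∑ p ∈ primesLE N, f p * Real.log p) / N) atTop (𝓝 A)) :
    Tendsto (fun N => (∑ p ∈ primesLE N, f p * ((p : ℝ) - 1)) / ∑ p ∈ primesLE N, ((p : ℝ) - 1))
      atTop (𝓝 A) := by
  have h_theta : Tendsto (fun N : ℕ => (∑ p ∈ primesLE N, Real.log p) / N) atTop (𝓝 1) := by
    simpa only [Function.comp_def, Chebyshev.theta_eq_sum_primesLE_log] using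
      tendsto_theta_div_atTop.comp tendsto_natCast_atTop_atTop
  have h_log : (fun N : ℕ => ∑ p ∈ primesLE N, (f p - A) * Real.log p) =o[atTop]
      fun N => (N : ℝ) := by
    refine (isLittleO_iff_tendsto' ?_).2 ?_
    · filter_upwards [eventually_ne_atTop 0] with N hN h_zero
      exact absurd (Nat.cast_eq_zero.1 h_zero) hN
    · simpa only [sub_mul, sum_sub_distrib, ← mul_sum, sub_div, mul_div_assoc, mul_one, sub_self]
        using h.sub (h_theta.const_mul A)
  refine tendsto_sub_nhds_zero_iff.1
    ((isLittleO_sum_primesLE_mul_sub_one h_log).tendsto_div_nhds_zero.congr' ?_)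
  filter_upwards [eventually_ge_atTop 2] with N hN
  have h_pos : 0 < ∑ p ∈ primesLE N, ((p : ℝ) - 1) :=
    sum_pos (fun p hp => sub_pos.2 (Nat.one_lt_cast.2 (prime_of_mem_primesLE hp).one_lt))
      ⟨2, mem_primesLE.2 ⟨hN, Nat.prime_two⟩⟩
  have h_split : ∑ p ∈ primesLE N, (f p - A) * ((p : ℝ) - 1) =
      ∑ p ∈ primesLE N, f p * ((p : ℝ) - 1) - A * ∑ p ∈ primesLE N, ((p : ℝ) - 1) := by
    simp only [mul_sum, ← sum_sub_distrib, ← sub_mul]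
  rw [h_split, sub_div, mul_div_cancel_right₀ _ h_pos.ne']

end WeightTransfer

section PrimeEnumeration

open Finset Nat

lemma sum_range_nth_prime {M : Type*} [AddCommMonoid M] (F : ℕ → M) (N : ℕ) :
    ∑ i ∈ range N, F (nth Nat.Prime i) = ∑ p ∈ primesBelow (nth Nat.Prime N), F p := by
  induction N with
  | zero =>
    rw [nth_prime_zero_eq_two]
    simp [primesBelow_succ, Nat.not_prime_zero, Nat.not_prime_one]
  | succ N ih =>
    rw [sum_range_succ, ih, primesBelow, primesBelow,
      filter_range_nth_eq_insert_of_infinite infinite_setOfPred_prime, sum_insert (by simp),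
      add_comm]

lemma tendsto_nth_prime_sub_one_atTop : Tendsto (fun N => nth Nat.Prime N - 1) atTop atTop :=
  (tendsto_sub_atTop_nat 1).comp (nth_strictMono infinite_setOfPred_prime).tendsto_atTop

end PrimeEnumeration

/-- The ratio `(∑_{i=1}^N φ(p_i - 1)) / (∑_{i=1}^N (p_i - 1))` over the first `N`
primes tends to Artin's constant. -/
theorem artin_ratio_formula :
    Tendsto (fun N : ℕ =>
        (∑ i ∈ Finset.range N, ((Nat.nth Nat.Prime i - 1).totient : ℝ)) /
        (∑ i ∈ Finset.range N, ((Nat.nth Nat.Prime i : ℝ) - 1)))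
      atTop (nhds artinConstant) := by
  have h_primesLE : Tendsto (fun N : ℕ =>
      (∑ p ∈ N.primesLE, ((p - 1).totient : ℝ)) / ∑ p ∈ N.primesLE, ((p : ℝ) - 1))
      atTop (nhds artinConstant) := by
    refine (tendsto_sum_primesLE_mul_sub_one_div
      tendsto_sum_primesLE_totient_div_mul_log_div).congr fun N => ?_
    congr 1
    refine Finset.sum_congr rfl fun p hp => ?_
    have hp := Nat.prime_of_mem_primesLE hp
    rw [← Nat.cast_pred hp.pos, div_mul_cancel₀ _ (Nat.cast_ne_zero.2 hp.pred_pos.ne')]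
  refine (h_primesLE.comp tendsto_nth_prime_sub_one_atTop).congr fun N => ?_
  rw [Function.comp_apply, ← Nat.primesBelow_eq_primesLE_sub_one,
    ← sum_range_nth_prime fun p => ((p - 1).totient : ℝ),
    ← sum_range_nth_prime fun p => (p : ℝ) - 1]
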